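/- (MacDuffee) Let A be an m×n complex matrix of rank k > 0 with a full-rank factorization A = B·D, where B is an m×k complex matrix with rank(B) = k and D is a k×n complex matrix with rank(D) = k. Then the k×k matrix Bᴴ·A·Dᴴ is invertible, and the matrix Dᴴ·(Bᴴ·A·Dᴴ)⁻¹·Bᴴ is a Moore–Penrose pseudoinverse of A. -/

import Mathlib

open Matrix

/-- `Z` is a Moore–Penrose pseudoinverse of `M`: it satisfies the four Penrose equations. -/
def IsMoorePenrose {m n : ℕ} (M : Matrix (Fin m) (Fin n) ℂ)
    (Z : Matrix (Fin n) (Fin m) ℂ) : Prop :=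
  M * Z * M = M ∧ Z * M * Z = Z ∧ (M * Z)ᴴ = M * Z ∧ (Z * M)ᴴ = Z * M

theorem isUnit_of_rank_eq_aux {k : ℕ} (P : Matrix (Fin k) (Fin k) ℂ) (h : P.rank = k) :
    IsUnit P := by
  rw [← Matrix.mulVec_surjective_iff_isUnit]
  have h1 : LinearMap.range P.mulVecLin = ⊤ := by
    apply Submodule.eq_top_of_finrank_eq
    rw [Module.finrank_fin_fun]
    exact h
  exact LinearMap.range_eq_top.mp h1

theorem macduffee_pseudoinverse_formula
    {m n k : ℕ} (hk : 0 < k)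
    (A : Matrix (Fin m) (Fin n) ℂ) (hA : A.rank = k)
    (B : Matrix (Fin m) (Fin k) ℂ) (D : Matrix (Fin k) (Fin n) ℂ)
    (hBD : A = B * D) (hB : B.rank = k) (hD : D.rank = k) :
    IsUnit (Bᴴ * A * Dᴴ) ∧
    IsMoorePenrose A (Dᴴ * (Bᴴ * A * Dᴴ)⁻¹ * Bᴴ) := by
  have hP : IsUnit (Bᴴ * B) :=
    isUnit_of_rank_eq_aux _ (by open scoped ComplexOrder in rw [Matrix.rank_conjTranspose_mul_self, hB])
  have hQ : IsUnit (D * Dᴴ) :=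
    isUnit_of_rank_eq_aux _ (by open scoped ComplexOrder in rw [Matrix.rank_self_mul_conjTranspose, hD])
  have hE : Bᴴ * A * Dᴴ = (Bᴴ * B) * (D * Dᴴ) := by
    rw [hBD]; simp only [Matrix.mul_assoc]
  refine ⟨hE ▸ hP.mul hQ, ?_⟩
  rw [hE, Matrix.mul_inv_rev]
  have hPd := (Matrix.isUnit_iff_isUnit_det _).mp hP
  have hQd := (Matrix.isUnit_iff_isUnit_det _).mp hQ
  have hPh : ((Bᴴ * B)⁻¹)ᴴ = (Bᴴ * B)⁻¹ := by
    rw [Matrix.conjTranspose_nonsing_inv]; simp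
  have hQh : ((D * Dᴴ)⁻¹)ᴴ = (D * Dᴴ)⁻¹ := by
    rw [Matrix.conjTranspose_nonsing_inv]; simp
  have hP1 := Matrix.nonsing_inv_mul _ hPd
  have hQ1 := Matrix.mul_nonsing_inv _ hQd
  have hQ2 := Matrix.nonsing_inv_mul _ hQd
  generalize (Bᴴ * B)⁻¹ = X at *
  generalize (D * Dᴴ)⁻¹ = Y at *
  have hAZ : A * (Dᴴ * (Y * X) * Bᴴ) = B * X * Bᴴ := by
    calc A * (Dᴴ * (Y * X) * Bᴴ) = B * ((D * Dᴴ) * Y) * X * Bᴴ := by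
          rw [hBD]; simp only [Matrix.mul_assoc]
      _ = _ := by rw [hQ1, Matrix.mul_one]
  have hZA : (Dᴴ * (Y * X) * Bᴴ) * A = Dᴴ * Y * D := by
    calc (Dᴴ * (Y * X) * Bᴴ) * A = Dᴴ * Y * (X * (Bᴴ * B)) * D := by
          rw [hBD]; simp only [Matrix.mul_assoc]
      _ = _ := by rw [hP1, Matrix.mul_one]
  refine ⟨?_, ?_, ?_, ?_⟩
  · rw [hAZ]
    calc B * X * Bᴴ * A = B * (X * (Bᴴ * B)) * D := by
          rw [hBD]; simp only [Matrix.mul_assoc]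
      _ = A := by rw [hP1, Matrix.mul_one, hBD]
  · rw [hZA]
    calc Dᴴ * Y * D * (Dᴴ * (Y * X) * Bᴴ) = Dᴴ * Y * ((D * Dᴴ) * Y) * X * Bᴴ := by
          simp only [Matrix.mul_assoc]
      _ = Dᴴ * (Y * X) * Bᴴ := by
          rw [hQ1, Matrix.mul_one]; simp only [Matrix.mul_assoc]
  · rw [hAZ]
    simp only [Matrix.conjTranspose_mul, Matrix.conjTranspose_conjTranspose, hPh, Matrix.mul_assoc]
  · rw [hZA]
    simp only [Matrix.conjTranspose_mul, Matrix.conjTranspose_conjTranspose, hQh, Matrix.mul_assoc]
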